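/- arXiv:1607.08816 — 2 statements merged into one kernel-verified Lean document; each statement's English description precedes it below -/
import Mathlib

section
/- With the data (Λ, ⟨·,·⟩, Ṽ) as in the context, there is a unique ℤ-bilinear bracket [·,·] : L × L → L satisfying: [λ, λ'] = 0 for λ, λ' ∈ Λ^∨; [λ, X_γ̃] = −[X_γ̃, λ] = λ(γ) X_γ̃ for λ ∈ Λ^∨ and γ̃ ∈ Γ̃ with image γ ∈ Γ; [X_γ̃, X_γ̃'] = X_{γ̃γ̃'} if γ + γ' ∈ Γ; [X_γ̃, X_γ̃'] = ε_{γ̃γ̃'} H_γ if γ + γ' = 0; and [X_γ̃, X_γ̃'] = 0 otherwise; and this bracket makes L a Lie ring over ℤ, i.e. it is alternating ([x,x] = 0 for all x ∈ L) and satisfies the Jacobi identity. -/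
/-!
Write `X_γ̃ = 0` for pairs `γ̃` that do not lie over a root. Then `[X_γ̃, X_γ̃'] = X_{γ̃γ̃'}`
whenever `γ + γ' ≠ 0`, and `L` is generated by `Λ^∨` and the `X_γ̃`, so the bracket is unique;
it exists because the prescribed values change sign when `γ̃` is replaced by `-γ̃`
(`lbr`, `lbr_isLurieBracket`).

Polarising `ṽ² = (-1)^{q(v)}` shows that the commutator pairing of `Ṽ` is `(-1)^⟨·,·⟩`
(`LurieData.comm`). As `γ + γ'` is a root exactly when `⟨γ, γ'⟩ = -1`, this gives antisymmetry.

The Jacobi identity is checked on generators. If an element of `Λ^∨` occurs, it says that the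
bracket respects weights. For root vectors with roots `α, β, γ` there are three cases. If two of
them are opposite, the pairing of the third with either lies in `{-2, …, 2}` and each value is
checked directly (`jacobi_opp`). If `α + β + γ = 0`, the sum is `±(H_α + H_β + H_γ) = 0`.
Otherwise nonzero terms occur only if `α + β + γ` is a root, which forces the pairings to be
`-1, -1, 0` up to order; exactly two terms survive, and they cancel by the commutation rule
(`jacobi_gen`).
-/

open scoped TensorProduct Classical

namespace Lurie

variable (Λ : Type) [AddCommGroup Λ]

/-- The subgroup `2Λ ⊆ Λ`, as a `ℤ`-submodule. -/
def twoLambda : Submodule ℤ Λ := LinearMap.range ((2 : ℤ) • (LinearMap.id : Λ →ₗ[ℤ] Λ))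

/-- `V = Λ/2Λ`. -/
abbrev ModTwo := Λ ⧸ twoLambda Λ

/-- The quotient map `Λ → Λ/2Λ`. -/
def mk2 : Λ →ₗ[ℤ] ModTwo Λ := (twoLambda Λ).mkQ

variable (Vt : Type) [Group Vt]
variable (B : Λ →ₗ[ℤ] Λ →ₗ[ℤ] ℤ) (p : Vt → ModTwo Λ) (ε : Vt)

/-- The hypotheses on the data `(Λ, ⟨·,·⟩, Ṽ)`: the bilinear form `B = ⟨·,·⟩` is
symmetric, positive definite and even, and its roots `Γ = {γ | ⟨γ,γ⟩ = 2}` generate `Λ`;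
`p : Ṽ → V = Λ/2Λ` is a surjective group homomorphism whose kernel is the central
subgroup `{1, ε}` of order 2 (so `Ṽ` is a central extension of `V` by `{±1}`, with
`ε` playing the role of `−1`), and every `ṽ ∈ Ṽ` lying over `v ∈ V` satisfies
`ṽ² = (−1)^{q(v)}`, where `q(λ) = ⟨λ,λ⟩/2`. -/
def LurieData : Prop :=
  (∀ x y : Λ, B x y = B y x) ∧
  (∀ x : Λ, x ≠ 0 → 0 < B x x) ∧
  (∀ x : Λ, 2 ∣ B x x) ∧
  Submodule.span ℤ {γ : Λ | B γ γ = 2} = ⊤ ∧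
  (∀ a b : Vt, p (a * b) = p a + p b) ∧
  Function.Surjective p ∧
  (∀ v : Vt, p v = 0 ↔ v = 1 ∨ v = ε) ∧
  (∀ g : Vt, ε * g = g * ε) ∧
  ε ≠ 1 ∧ ε ^ 2 = 1 ∧
  (∀ (v : Vt) (l : Λ), p v = mk2 Λ l → v ^ 2 = ε ^ (B l l / 2))

/-- The set `Γ̃` of elements of the fibre product `Λ̃ = Λ ×_V Ṽ` lying over roots
`γ ∈ Γ` of `Λ` (the group structure of `Λ̃` is componentwise, and is referred to below
via the underlying pairs). -/
def Rt : Type := {x : Λ × Vt // p x.2 = mk2 Λ x.1 ∧ B x.1 x.1 = 2}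

/-- The subgroup of relations `X_{−γ̃} + X_{γ̃}` in the free abelian group on `Γ̃`;
here `−γ̃ = (−1)·γ̃` has underlying pair `(γ, ε·ṽ)` when `γ̃` has underlying pair `(γ, ṽ)`. -/
def negRel : AddSubgroup (FreeAbelianGroup (Rt Λ Vt B p)) :=
  AddSubgroup.closure {z | ∃ a b : Rt Λ Vt B p,
    b.val.1 = a.val.1 ∧ b.val.2 = ε * a.val.2 ∧
    z = FreeAbelianGroup.of a + FreeAbelianGroup.of b}

/-- `L'`: the free abelian group on the symbols `X_γ̃`, `γ̃ ∈ Γ̃`, modulo the relations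
`X_{−γ̃} = −X_γ̃`. -/
abbrev Lp := FreeAbelianGroup (Rt Λ Vt B p) ⧸ negRel Λ Vt B p ε

/-- Lurie's `L = Λ^∨ ⊕ L'`. -/
abbrev LL := Module.Dual ℤ Λ × Lp Λ Vt B p ε

/-- The inclusion `Λ^∨ → L`. -/
def iota (f : Module.Dual ℤ Λ) : LL Λ Vt B p ε := (f, 0)

/-- The generator `X_γ̃ ∈ L` for `γ̃ ∈ Γ̃`. -/
def XX (a : Rt Λ Vt B p) : LL Λ Vt B p ε :=
  (0, QuotientAddGroup.mk (FreeAbelianGroup.of a))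

/-- The defining identities of Lurie's bracket on `L = Λ^∨ ⊕ L'`:
`[λ, λ'] = 0`; `[λ, X_γ̃] = −[X_γ̃, λ] = λ(γ) X_γ̃`; `[X_γ̃, X_γ̃'] = X_{γ̃γ̃'}` if
`γ + γ' ∈ Γ`; `[X_γ̃, X_γ̃'] = ε_{γ̃γ̃'} H_γ` if `γ + γ' = 0` (where
`ε_{γ̃γ̃'} = γ̃γ̃' ∈ {±1}` and `H_γ = ⟨γ,·⟩ ∈ Λ^∨`); and `[X_γ̃, X_γ̃'] = 0` otherwise. -/
def IsLurieBracket (br : LL Λ Vt B p ε →+ LL Λ Vt B p ε →+ LL Λ Vt B p ε) : Prop :=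
  (∀ f g : Module.Dual ℤ Λ, br (iota Λ Vt B p ε f) (iota Λ Vt B p ε g) = 0) ∧
  (∀ (f : Module.Dual ℤ Λ) (a : Rt Λ Vt B p),
    br (iota Λ Vt B p ε f) (XX Λ Vt B p ε a) = f a.val.1 • XX Λ Vt B p ε a) ∧
  (∀ (f : Module.Dual ℤ Λ) (a : Rt Λ Vt B p),
    br (XX Λ Vt B p ε a) (iota Λ Vt B p ε f) = -(f a.val.1 • XX Λ Vt B p ε a)) ∧
  (∀ a b c : Rt Λ Vt B p, c.val.1 = a.val.1 + b.val.1 → c.val.2 = a.val.2 * b.val.2 →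
    br (XX Λ Vt B p ε a) (XX Λ Vt B p ε b) = XX Λ Vt B p ε c) ∧
  (∀ a b : Rt Λ Vt B p, a.val.1 + b.val.1 = 0 →
    br (XX Λ Vt B p ε a) (XX Λ Vt B p ε b) =
      (if a.val.2 * b.val.2 = 1 then (1 : ℤ) else -1) • iota Λ Vt B p ε (B a.val.1)) ∧
  (∀ a b : Rt Λ Vt B p, a.val.1 + b.val.1 ≠ 0 →
    B (a.val.1 + b.val.1) (a.val.1 + b.val.1) ≠ 2 →
    br (XX Λ Vt B p ε a) (XX Λ Vt B p ε b) = 0)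


section Helpers

variable {Λ Vt B p ε}

/-! ### The central extension and the roots -/

/-- The sign `±1 ∈ ℤ` attached to an element `1` or `ε` of the kernel of `Ṽ → V`. -/
noncomputable def sgn (v : Vt) : ℤ := if v = 1 then 1 else -1

theorem LurieData.eps_mul_eps (h : LurieData Λ Vt B p ε) : ε * ε = 1 := by
  obtain ⟨-, -, -, -, -, -, -, -, -, h2, -⟩ := h
  rw [← pow_two, h2]

theorem LurieData.p_eps (h : LurieData Λ Vt B p ε) : p ε = 0 := by
  obtain ⟨-, -, -, -, -, -, hker, -⟩ := h
  exact (hker ε).2 (Or.inr rfl)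

theorem LurieData.p_eps_mul (h : LurieData Λ Vt B p ε) (v : Vt) : p (ε * v) = p v := by
  have h0 := h.p_eps
  obtain ⟨-, -, -, -, hmul, -⟩ := h
  rw [hmul, h0, zero_add]

theorem LurieData.p_mul (h : LurieData Λ Vt B p ε) {v w : Vt} {l m : Λ}
    (hv : p v = mk2 Λ l) (hw : p w = mk2 Λ m) : p (v * w) = mk2 Λ (l + m) := by
  obtain ⟨-, -, -, -, hmul, -⟩ := h
  rw [hmul, hv, hw, map_add]

theorem LurieData.ker (h : LurieData Λ Vt B p ε) {v : Vt} (hv : p v = mk2 Λ 0) :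
    v = 1 ∨ v = ε := by
  obtain ⟨-, -, -, -, -, -, hker, -⟩ := h
  exact (hker v).1 (by rw [hv, map_zero])

theorem LurieData.ker_comm (h : LurieData Λ Vt B p ε) {v : Vt} (hv : p v = mk2 Λ 0) (g : Vt) :
    v * g = g * v := by
  rcases h.ker hv with rfl | rfl
  · rw [one_mul, mul_one]
  · obtain ⟨-, -, -, -, -, -, -, hc, -⟩ := h
    exact hc g

/-- A product lying over `0` is invariant under cyclic rotation, being central. -/
theorem LurieData.rotate (h : LurieData Λ Vt B p ε) {v w : Vt} (hv : p (v * w) = mk2 Λ 0) :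
    w * v = v * w := by
  have e : w * v = v⁻¹ * ((v * w) * v) := by group
  rw [e, h.ker_comm hv, inv_mul_cancel_left]

theorem LurieData.sgn_one : sgn (1 : Vt) = 1 := if_pos rfl

theorem LurieData.sgn_eps (h : LurieData Λ Vt B p ε) : sgn ε = -1 := by
  obtain ⟨-, -, -, -, -, -, -, -, h1, -⟩ := h
  exact if_neg h1

theorem LurieData.sgn_eps_mul (h : LurieData Λ Vt B p ε) {v : Vt} (hv : p v = mk2 Λ 0) :
    sgn (ε * v) = -sgn v := by
  rcases h.ker hv with rfl | rfl
  · rw [mul_one, h.sgn_eps, sgn_one]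
  · rw [h.eps_mul_eps, h.sgn_eps, sgn_one, neg_neg]

/-- The norm of a sum, in terms of the norms of the summands. -/
theorem LurieData.norm_add (h : LurieData Λ Vt B p ε) (x y : Λ) :
    B (x + y) (x + y) = B x x + B y y + 2 * B x y := by
  obtain ⟨hs, -⟩ := h
  simp only [map_add, LinearMap.add_apply, hs y x]; ring

/-- The commutator pairing of `Ṽ` is `(-1)^⟨·,·⟩`; it is the polarisation of the squaring
map `ṽ ↦ (-1)^{q(v)}`. -/
theorem LurieData.comm (h : LurieData Λ Vt B p ε) {v w : Vt} {l m : Λ}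
    (hv : p v = mk2 Λ l) (hw : p w = mk2 Λ m) : w * v = ε ^ (B l m) * (v * w) := by
  have hn := h.norm_add l m
  have hvw := h.p_mul hv hw
  obtain ⟨hs, -, he, -, -, -, -, hc, -, h2, hq⟩ := h
  have hcc : ∀ (k : ℤ) (g : Vt), ε ^ k * g = g * ε ^ k := fun k g =>
    (Commute.zpow_left (hc g) k)
  have e1 := hq _ _ hvw
  have e2 := hq _ _ hv
  have e3 := hq _ _ hw
  have hdiv : B (l + m) (l + m) / 2 = B l l / 2 + B l m + B m m / 2 := by
    have := he l; have := he m; omega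
  rw [hdiv, zpow_add, zpow_add, ← e2, ← e3] at e1
  have e4 : v * (w * v) * w = v * (ε ^ (B l m) * (v * w)) * w := by
    calc v * (w * v) * w = (v * w) ^ 2 := by rw [pow_two]; group
      _ = v ^ 2 * ε ^ (B l m) * w ^ 2 := e1
      _ = v * (v * ε ^ (B l m)) * (w * w) := by rw [pow_two, pow_two]; group
      _ = v * (ε ^ (B l m) * (v * w)) * w := by rw [← hcc]; group
  exact mul_left_cancel (mul_right_cancel e4)

theorem LurieData.comm_odd (h : LurieData Λ Vt B p ε) {v w : Vt} {l m : Λ}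
    (hv : p v = mk2 Λ l) (hw : p w = mk2 Λ m) (hB : B l m = -1) : w * v = ε * (v * w) := by
  rw [h.comm hv hw, hB, zpow_neg_one, inv_eq_of_mul_eq_one_left h.eps_mul_eps]

theorem LurieData.comm_zero (h : LurieData Λ Vt B p ε) {v w : Vt} {l m : Λ}
    (hv : p v = mk2 Λ l) (hw : p w = mk2 Λ m) (hB : B l m = 0) : w * v = v * w := by
  rw [h.comm hv hw, hB, zpow_zero, one_mul]

/-- Two roots are opposite or have pairing at least `-1` (Cauchy–Schwarz). -/
theorem LurieData.neg_one_le (h : LurieData Λ Vt B p ε) {l m : Λ} (hl : B l l = 2)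
    (hm : B m m = 2) (h0 : l + m ≠ 0) : -1 ≤ B l m := by
  have := h.norm_add l m
  obtain ⟨-, hpos, -⟩ := h
  have := hpos _ h0
  omega

/-- Two roots are equal or have pairing at most `1` (Cauchy–Schwarz). -/
theorem LurieData.le_one (h : LurieData Λ Vt B p ε) {l m : Λ} (hl : B l l = 2)
    (hm : B m m = 2) (h0 : l ≠ m) : B l m ≤ 1 := by
  have h1 := h.neg_one_le (l := l) (m := -m) hl (by simpa using hm)
    (by rwa [← sub_eq_add_neg, sub_ne_zero])
  rw [map_neg] at h1
  omega

/-! ### Generators of `L` -/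

variable (B p ε) in
/-- `X_x̃ ∈ L` for an arbitrary pair `x̃ = (l, v)`, with value `0` unless the pair is an
element of `Γ̃`. This convention merges the last case of the bracket with the
case of a root sum, so that one formula covers both. -/
noncomputable def YY (l : Λ) (v : Vt) : LL Λ Vt B p ε :=
  if h : p v = mk2 Λ l ∧ B l l = 2 then XX Λ Vt B p ε ⟨(l, v), h⟩ else 0

theorem YY_of_mem {l : Λ} {v : Vt} (h : p v = mk2 Λ l ∧ B l l = 2) :
    YY B p ε l v = XX Λ Vt B p ε ⟨(l, v), h⟩ := dif_pos h

theorem YY_eq_zero {l : Λ} {v : Vt} (h : B l l ≠ 2) : YY B p ε l v = 0 :=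
  dif_neg fun h' => h h'.2

theorem XX_eq (a : Rt Λ Vt B p) : XX Λ Vt B p ε a = YY B p ε a.val.1 a.val.2 :=
  (YY_of_mem a.property).symm

/-- The relation `X_{-γ̃} = -X_γ̃`. -/
theorem XX_neg {a b : Rt Λ Vt B p} (h1 : b.val.1 = a.val.1) (h2 : b.val.2 = ε * a.val.2) :
    XX Λ Vt B p ε b = -XX Λ Vt B p ε a := by
  rw [eq_neg_iff_add_eq_zero, add_comm]
  refine Prod.ext (add_zero _) ?_
  change (QuotientAddGroup.mk (FreeAbelianGroup.of a + FreeAbelianGroup.of b) :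
    Lp Λ Vt B p ε) = 0
  rw [QuotientAddGroup.eq_zero_iff]
  exact AddSubgroup.subset_closure ⟨a, b, h1, h2, rfl⟩

theorem LurieData.YY_eps (h : LurieData Λ Vt B p ε) (l : Λ) (v : Vt) :
    YY B p ε l (ε * v) = -YY B p ε l v := by
  by_cases h1 : p v = mk2 Λ l ∧ B l l = 2
  · have h2 : p (ε * v) = mk2 Λ l ∧ B l l = 2 := ⟨(h.p_eps_mul v).trans h1.1, h1.2⟩
    rw [YY_of_mem h1, YY_of_mem h2]
    exact XX_neg rfl rfl
  · have h2 : ¬(p (ε * v) = mk2 Λ l ∧ B l l = 2) := by rwa [h.p_eps_mul]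
    rw [YY, YY, dif_neg h1, dif_neg h2, neg_zero]

theorem LurieData.YY_sgn (h : LurieData Λ Vt B p ε) (l : Λ) (v : Vt) {w : Vt}
    (hw : p w = mk2 Λ 0) : YY B p ε l (w * v) = sgn w • YY B p ε l v := by
  rcases h.ker hw with rfl | rfl
  · rw [one_mul, sgn_one, one_smul]
  · rw [h.YY_eps, h.sgn_eps, neg_one_smul]

/-- `L` is generated by `Λ^∨` and the `X_γ̃`. -/
theorem LL_induction {P : LL Λ Vt B p ε → Prop} (hi : ∀ f, P (iota Λ Vt B p ε f))
    (hX : ∀ a, P (XX Λ Vt B p ε a)) (hadd : ∀ x y, P x → P y → P (x + y))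
    (hneg : ∀ x, P x → P (-x)) (x : LL Λ Vt B p ε) : P x := by
  obtain ⟨f, y⟩ := x
  have hy : P (0, y) := by
    induction y using QuotientAddGroup.induction_on with
    | H z =>
      induction z using FreeAbelianGroup.induction_on with
      | zero => exact hi 0
      | of a => exact hX a
      | neg a _ => exact (by simpa [XX] using hneg _ (hX a))
      | add x y hx hy => exact (by simpa using hadd _ _ hx hy)
  have := hadd _ _ (hi f) hy
  simpa [iota] using this

/-! ### Construction of the bracket -/

/-- The universal property of `L'`. -/
def liftLp {M : Type} [AddCommGroup M] (g : Rt Λ Vt B p → M)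
    (hg : ∀ a b : Rt Λ Vt B p, b.val.1 = a.val.1 → b.val.2 = ε * a.val.2 → g b = -g a) :
    Lp Λ Vt B p ε →+ M :=
  QuotientAddGroup.lift _ (FreeAbelianGroup.lift g) (by
    rw [negRel, AddSubgroup.closure_le]
    rintro _ ⟨a, b, h1, h2, rfl⟩
    simp [hg a b h1 h2])

variable (ε) in
/-- The class of `X_γ̃` in `L'`. -/
def xLp (a : Rt Λ Vt B p) : Lp Λ Vt B p ε := QuotientAddGroup.mk (FreeAbelianGroup.of a)

theorem liftLp_x {M : Type} [AddCommGroup M] (g : Rt Λ Vt B p → M)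
    (hg : ∀ a b : Rt Λ Vt B p, b.val.1 = a.val.1 → b.val.2 = ε * a.val.2 → g b = -g a)
    (a : Rt Λ Vt B p) : liftLp g hg (xLp ε a) = g a :=
  FreeAbelianGroup.lift_apply_of g a

theorem Lp_hom_ext {M : Type} [AddCommGroup M] {f g : Lp Λ Vt B p ε →+ M}
    (h : ∀ a, f (xLp ε a) = g (xLp ε a)) : f = g :=
  QuotientAddGroup.addMonoidHom_ext _ (FreeAbelianGroup.lift_ext _ _ h)

variable (Λ Vt B p ε) in
/-- The action `[λ, X_γ̃] = λ(γ) X_γ̃` of `Λ^∨` on `L'`. -/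
noncomputable def brD : Module.Dual ℤ Λ →+ Lp Λ Vt B p ε →+ LL Λ Vt B p ε :=
  AddMonoidHom.mk' (fun f => liftLp (fun a => f a.val.1 • XX Λ Vt B p ε a)
    (fun a b h1 h2 => by rw [XX_neg h1 h2, h1, smul_neg]))
    (fun f g => Lp_hom_ext fun a => by
      rw [AddMonoidHom.add_apply, liftLp_x, liftLp_x, liftLp_x, LinearMap.add_apply, add_smul])

theorem brD_x (f : Module.Dual ℤ Λ) (a : Rt Λ Vt B p) :
    brD Λ Vt B p ε f (xLp ε a) = f a.val.1 • XX Λ Vt B p ε a := by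
  unfold brD
  rw [AddMonoidHom.mk'_apply, liftLp_x]

variable (ε) in
/-- The prescribed value of `[X_γ̃, X_γ̃']`. -/
noncomputable def brX (a b : Rt Λ Vt B p) : LL Λ Vt B p ε :=
  if a.val.1 + b.val.1 = 0 then sgn (a.val.2 * b.val.2) • iota Λ Vt B p ε (B a.val.1)
  else YY B p ε (a.val.1 + b.val.1) (a.val.2 * b.val.2)

theorem LurieData.brX_neg_right (h : LurieData Λ Vt B p ε) (a b c : Rt Λ Vt B p)
    (h1 : c.val.1 = b.val.1) (h2 : c.val.2 = ε * b.val.2) : brX ε a c = -brX ε a b := by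
  have hm := h.p_mul a.property.1 b.property.1
  have e : a.val.2 * c.val.2 = ε * (a.val.2 * b.val.2) := by
    obtain ⟨-, -, -, -, -, -, -, hc, -⟩ := h
    rw [h2, ← mul_assoc, ← mul_assoc, hc]
  unfold brX
  rw [h1, e]
  split_ifs with h0
  · rw [h0] at hm
    rw [h.sgn_eps_mul hm, neg_smul]
  · rw [h.YY_eps]

theorem LurieData.brX_neg_left (h : LurieData Λ Vt B p ε) (a b c : Rt Λ Vt B p)
    (h1 : b.val.1 = a.val.1) (h2 : b.val.2 = ε * a.val.2) : brX ε b c = -brX ε a c := by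
  have hm := h.p_mul a.property.1 c.property.1
  unfold brX
  rw [h1, h2, mul_assoc]
  split_ifs with h0
  · rw [h0] at hm
    rw [h.sgn_eps_mul hm, neg_smul]
  · rw [h.YY_eps]

/-- The component `L' × L' → L` of the bracket. -/
noncomputable def brE (h : LurieData Λ Vt B p ε) :
    Lp Λ Vt B p ε →+ Lp Λ Vt B p ε →+ LL Λ Vt B p ε :=
  liftLp (fun a => liftLp (brX ε a) (h.brX_neg_right a))
    (fun a b h1 h2 => Lp_hom_ext fun c => by
      rw [AddMonoidHom.neg_apply, liftLp_x, liftLp_x, h.brX_neg_left a b c h1 h2])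

theorem brE_x (h : LurieData Λ Vt B p ε) (a b : Rt Λ Vt B p) :
    brE h (xLp ε a) (xLp ε b) = brX ε a b := by
  unfold brE
  rw [liftLp_x, liftLp_x]

/-- The bracket `[(λ, x), (λ', x')] = λ·x' - λ'·x + [x, x']` on `L = Λ^∨ ⊕ L'`. -/
noncomputable def lbr (h : LurieData Λ Vt B p ε) :
    LL Λ Vt B p ε →+ LL Λ Vt B p ε →+ LL Λ Vt B p ε :=
  AddMonoidHom.mk' (fun x => AddMonoidHom.mk'
      (fun y => brD Λ Vt B p ε x.1 y.2 - brD Λ Vt B p ε y.1 x.2 + brE h x.2 y.2)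
      (fun y z => by
        simp only [Prod.fst_add, Prod.snd_add, map_add, AddMonoidHom.add_apply]; abel))
    (fun x z => by
      ext1 y
      simp only [AddMonoidHom.mk'_apply, Prod.fst_add, Prod.snd_add, map_add,
        AddMonoidHom.add_apply]
      abel)

theorem lbr_apply (h : LurieData Λ Vt B p ε) (x y : LL Λ Vt B p ε) :
    lbr h x y = brD Λ Vt B p ε x.1 y.2 - brD Λ Vt B p ε y.1 x.2 + brE h x.2 y.2 := rfl

theorem lbr_XX (h : LurieData Λ Vt B p ε) (a b : Rt Λ Vt B p) :
    lbr h (XX Λ Vt B p ε a) (XX Λ Vt B p ε b) = brX ε a b := by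
  change brD Λ Vt B p ε 0 (xLp ε b) - brD Λ Vt B p ε 0 (xLp ε a) +
    brE h (xLp ε a) (xLp ε b) = _
  rw [brE_x, map_zero, AddMonoidHom.zero_apply, AddMonoidHom.zero_apply, sub_zero, zero_add]

theorem lbr_isLurieBracket (h : LurieData Λ Vt B p ε) : IsLurieBracket Λ Vt B p ε (lbr h) := by
  refine ⟨fun f g => ?_, fun f a => ?_, fun f a => ?_, fun a b c h1 h2 => ?_,
    fun a b h0 => ?_, fun a b h0 h2 => ?_⟩
  · simp [lbr_apply, iota]
  · change brD Λ Vt B p ε f (xLp ε a) - brD Λ Vt B p ε 0 0 + brE h 0 (xLp ε a) = _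
    rw [brD_x]; simp
  · change brD Λ Vt B p ε 0 0 - brD Λ Vt B p ε f (xLp ε a) + brE h (xLp ε a) 0 = _
    rw [brD_x]; simp
  · have h0 : a.val.1 + b.val.1 ≠ 0 := by
      intro h0
      have := c.property.2
      rw [h1, h0] at this
      simp at this
    rw [lbr_XX, brX, if_neg h0, ← h1, ← h2, XX_eq]
  · rw [lbr_XX, brX, if_pos h0, sgn]
  · rw [lbr_XX, brX, if_neg h0, YY_eq_zero h2]

/-! ### Formulas valid for every bracket satisfying the identities -/

variable {br : LL Λ Vt B p ε →+ LL Λ Vt B p ε →+ LL Λ Vt B p ε}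

theorem IsLurieBracket.iota_YY (hb : IsLurieBracket Λ Vt B p ε br) (f : Module.Dual ℤ Λ)
    (l : Λ) (v : Vt) : br (iota Λ Vt B p ε f) (YY B p ε l v) = f l • YY B p ε l v := by
  by_cases h1 : p v = mk2 Λ l ∧ B l l = 2
  · rw [YY_of_mem h1]; exact hb.2.1 f _
  · rw [YY, dif_neg h1, map_zero, smul_zero]

theorem IsLurieBracket.YY_iota (hb : IsLurieBracket Λ Vt B p ε br) (f : Module.Dual ℤ Λ)
    (l : Λ) (v : Vt) : br (YY B p ε l v) (iota Λ Vt B p ε f) = -(f l • YY B p ε l v) := by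
  by_cases h1 : p v = mk2 Λ l ∧ B l l = 2
  · rw [YY_of_mem h1]; exact hb.2.2.1 f _
  · rw [YY, dif_neg h1, map_zero, AddMonoidHom.zero_apply, smul_zero, neg_zero]

/-- The bracket of two root vectors whose roots are not opposite. -/
theorem IsLurieBracket.YY_YY (hb : IsLurieBracket Λ Vt B p ε br) (h : LurieData Λ Vt B p ε)
    {l m : Λ} {v w : Vt} (hv : p v = mk2 Λ l) (hl : B l l = 2) (hw : p w = mk2 Λ m)
    (hm : B m m = 2) (h0 : l + m ≠ 0) :
    br (YY B p ε l v) (YY B p ε m w) = YY B p ε (l + m) (v * w) := by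
  rw [YY_of_mem ⟨hv, hl⟩, YY_of_mem ⟨hw, hm⟩]
  by_cases h2 : B (l + m) (l + m) = 2
  · rw [YY_of_mem ⟨h.p_mul hv hw, h2⟩]
    exact hb.2.2.2.1 _ _ _ rfl rfl
  · rw [YY_eq_zero h2]
    exact hb.2.2.2.2.2 _ _ h0 h2

theorem IsLurieBracket.YY_YY_zero (hb : IsLurieBracket Λ Vt B p ε br)
    {l m : Λ} {v w : Vt} (hv : p v = mk2 Λ l) (hl : B l l = 2) (hw : p w = mk2 Λ m)
    (hm : B m m = 2) (h0 : l + m = 0) :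
    br (YY B p ε l v) (YY B p ε m w) = sgn (v * w) • iota Λ Vt B p ε (B l) := by
  rw [YY_of_mem ⟨hv, hl⟩, YY_of_mem ⟨hw, hm⟩]
  exact hb.2.2.2.2.1 _ _ h0

/-- The identities determine the bracket. -/
theorem IsLurieBracket.eq_of (h : LurieData Λ Vt B p ε)
    {br' : LL Λ Vt B p ε →+ LL Λ Vt B p ε →+ LL Λ Vt B p ε}
    (hb : IsLurieBracket Λ Vt B p ε br) (hb' : IsLurieBracket Λ Vt B p ε br') : br = br' := by
  refine AddMonoidHom.ext fun x => AddMonoidHom.ext fun y => ?_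
  induction x using LL_induction with
  | hadd x x' h1 h2 => rw [map_add, map_add, AddMonoidHom.add_apply, AddMonoidHom.add_apply, h1, h2]
  | hneg x h1 => rw [map_neg, map_neg, AddMonoidHom.neg_apply, AddMonoidHom.neg_apply, h1]
  | hi f =>
    induction y using LL_induction with
    | hadd x x' h1 h2 => rw [map_add, map_add, h1, h2]
    | hneg x h1 => rw [map_neg, map_neg, h1]
    | hi g => rw [hb.1, hb'.1]
    | hX a => rw [hb.2.1, hb'.2.1]
  | hX a =>
    induction y using LL_induction with
    | hadd x x' h1 h2 => rw [map_add, map_add, h1, h2]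
    | hneg x h1 => rw [map_neg, map_neg, h1]
    | hi g => rw [hb.2.2.1, hb'.2.2.1]
    | hX b =>
      obtain ⟨hv, hl⟩ := a.property
      obtain ⟨hw, hm⟩ := b.property
      rw [XX_eq, XX_eq]
      by_cases h0 : a.val.1 + b.val.1 = 0
      · rw [hb.YY_YY_zero hv hl hw hm h0, hb'.YY_YY_zero hv hl hw hm h0]
      · rw [hb.YY_YY h hv hl hw hm h0, hb'.YY_YY h hv hl hw hm h0]

/-! ### Antisymmetry -/

/-- Antisymmetry on root vectors: if `γ + γ'` is a root then `⟨γ, γ'⟩ = -1`, so `γ̃` and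
`γ̃'` anticommute. -/
theorem IsLurieBracket.antisymm_YY (hb : IsLurieBracket Λ Vt B p ε br)
    (h : LurieData Λ Vt B p ε) {l m : Λ} {v w : Vt} (hv : p v = mk2 Λ l) (hl : B l l = 2)
    (hw : p w = mk2 Λ m) (hm : B m m = 2) :
    br (YY B p ε m w) (YY B p ε l v) = -br (YY B p ε l v) (YY B p ε m w) := by
  by_cases h0 : l + m = 0
  · have h0' : m + l = 0 := by rw [add_comm, h0]
    have hml : m = -l := eq_neg_of_add_eq_zero_right h0
    have hvw := h.p_mul hv hw
    rw [h0] at hvw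
    have hc := h.rotate hvw
    rw [hb.YY_YY_zero hv hl hw hm h0, hb.YY_YY_zero hw hm hv hl h0', hc, hml, map_neg]
    rw [← smul_neg]
    congr 1
  · have h0' : m + l ≠ 0 := by rwa [add_comm]
    rw [hb.YY_YY h hv hl hw hm h0, hb.YY_YY h hw hm hv hl h0', add_comm m l]
    have hn := h.norm_add l m
    by_cases h1 : B l m = -1
    · rw [h.comm_odd hv hw h1, h.YY_eps]
    · have h2 : B (l + m) (l + m) ≠ 2 := by omega
      rw [YY_eq_zero h2, YY_eq_zero h2, neg_zero]

theorem IsLurieBracket.antisymm (hb : IsLurieBracket Λ Vt B p ε br)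
    (h : LurieData Λ Vt B p ε) (x y : LL Λ Vt B p ε) : br y x = -br x y := by
  induction x using LL_induction with
  | hadd x x' h1 h2 => rw [map_add, map_add, AddMonoidHom.add_apply, h1, h2, neg_add]
  | hneg x h1 => rw [map_neg, map_neg, AddMonoidHom.neg_apply, h1]
  | hi f =>
    induction y using LL_induction with
    | hadd x x' h1 h2 => rw [map_add, map_add, AddMonoidHom.add_apply, h1, h2, neg_add]
    | hneg x h1 => rw [map_neg, map_neg, AddMonoidHom.neg_apply, h1]
    | hi g => rw [hb.1, hb.1, neg_zero]
    | hX a => rw [hb.2.1, hb.2.2.1]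
  | hX a =>
    induction y using LL_induction with
    | hadd x x' h1 h2 => rw [map_add, map_add, AddMonoidHom.add_apply, h1, h2, neg_add]
    | hneg x h1 => rw [map_neg, map_neg, AddMonoidHom.neg_apply, h1]
    | hi g => rw [hb.2.1, hb.2.2.1, neg_neg]
    | hX b =>
      rw [XX_eq, XX_eq]
      exact hb.antisymm_YY h a.property.1 a.property.2 b.property.1 b.property.2

theorem IsLurieBracket.alt (hb : IsLurieBracket Λ Vt B p ε br)
    (h : LurieData Λ Vt B p ε) (x : LL Λ Vt B p ε) : br x x = 0 := by
  induction x using LL_induction with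
  | hadd x y h1 h2 =>
    rw [map_add br, AddMonoidHom.add_apply, map_add, map_add, h1, h2, hb.antisymm h x y]
    abel
  | hneg x h1 => rw [map_neg br, AddMonoidHom.neg_apply, map_neg, h1, neg_zero, neg_zero]
  | hi f => exact hb.1 f f
  | hX a =>
    -- `2γ` has norm `8`, so it is neither `0` nor a root.
    have hn := h.norm_add a.val.1 a.val.1
    rw [a.property.2] at hn
    refine hb.2.2.2.2.2 a a (fun h0 => ?_) (by omega)
    rw [h0] at hn
    simp at hn

/-! ### The Jacobi identity -/

/-- Jacobi for three root vectors, two of which have opposite roots. -/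
theorem IsLurieBracket.jacobi_opp (hb : IsLurieBracket Λ Vt B p ε br)
    (h : LurieData Λ Vt B p ε) {l m n : Λ} {u v w : Vt} (hu : p u = mk2 Λ l) (hl : B l l = 2)
    (hv : p v = mk2 Λ m) (hm : B m m = 2) (hw : p w = mk2 Λ n) (hn : B n n = 2)
    (h0 : l + m = 0) :
    br (YY B p ε l u) (br (YY B p ε m v) (YY B p ε n w)) +
      br (YY B p ε m v) (br (YY B p ε n w) (YY B p ε l u)) +
      br (YY B p ε n w) (br (YY B p ε l u) (YY B p ε m v)) = 0 := by
  have hmn : m = -l := eq_neg_of_add_eq_zero_right h0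
  have huv := h.p_mul hu hv
  rw [h0] at huv
  have hs : B n l = B l n := h.1 n l
  have hml : B m l = -2 := by rw [hmn, map_neg, LinearMap.neg_apply, hl]
  have hmB : B m n = -B l n := by rw [hmn, map_neg, LinearMap.neg_apply]
  have hN1 := h.norm_add m n
  have hN2 := h.norm_add n l
  have hl0 : l ≠ 0 := by rintro rfl; simp at hl
  have hn0 : n ≠ 0 := by rintro rfl; simp at hn
  rw [hb.YY_YY_zero hu hl hv hm h0, map_zsmul, hb.YY_iota]
  by_cases hnl : n = l
  · subst hnl
    have h1 : m + n = 0 := by rw [add_comm, h0]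
    have hvw := h.p_mul hv hw
    rw [h1] at hvw
    have h2 : n + n ≠ 0 := by intro h2; rw [h2] at hN2; simp at hN2; omega
    rw [hb.YY_YY_zero hv hm hw hn h1, hb.YY_YY h hw hn hu hl h2,
      YY_eq_zero (l := n + n) (by omega), map_zero, map_zsmul, hb.YY_iota, hml, hn]
    have e : sgn (v * w) • YY B p ε n u = sgn (u * v) • YY B p ε n w := by
      rw [← h.YY_sgn n u hvw, ← h.YY_sgn n w huv, h.ker_comm hvw, mul_assoc]
    rw [smul_neg, smul_neg, smul_comm (sgn (v * w)), smul_comm (sgn (u * v)), e, neg_smul]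
    abel
  by_cases hnm : n = m
  · subst hnm
    have h1 : n + l = 0 := by rw [add_comm, h0]
    have hwu := h.p_mul hw hu
    rw [h1] at hwu
    have h2 : n + n ≠ 0 := by intro h2; rw [h2] at hN1; simp at hN1; omega
    rw [hb.YY_YY_zero hw hn hu hl h1, hb.YY_YY h hv hm hw hn h2,
      YY_eq_zero (l := n + n) (by omega), map_zero, map_zsmul, hb.YY_iota, ← hs, hml, hn]
    have e : sgn (w * u) • YY B p ε n v = sgn (u * v) • YY B p ε n w := by
      rw [← h.YY_sgn n v hwu, ← h.YY_sgn n w huv, h.ker_comm huv, mul_assoc]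
    rw [smul_neg, smul_neg, smul_comm (sgn (w * u)), smul_comm (sgn (u * v)), e, neg_smul]
    abel
  have h1 : m + n ≠ 0 := by
    intro h1
    apply hnl
    rw [hmn] at h1
    exact (neg_add_eq_zero.1 h1).symm
  have h2 : n + l ≠ 0 := by
    intro h2
    apply hnm
    rw [hmn]
    exact eq_neg_of_add_eq_zero_left h2
  have b1 := h.neg_one_le hn hl h2
  have b2 := h.le_one hn hl hnl
  have s1 : l + (m + n) = n := by rw [← add_assoc, h0, zero_add]
  have s2 : m + (n + l) = n := by rw [add_comm n, ← add_assoc, add_comm m, h0, zero_add]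
  rw [hb.YY_YY h hv hm hw hn h1, hb.YY_YY h hw hn hu hl h2]
  have hk : B l n = -1 ∨ B l n = 0 ∨ B l n = 1 := by omega
  rcases hk with hk | hk | hk
  · rw [YY_eq_zero (l := m + n) (by omega), map_zero,
      hb.YY_YY h hv hm (h.p_mul hw hu) (by omega) (by rwa [s2]), s2, h.comm_odd hu hw hk, hk]
    have e : v * (ε * (u * w)) = ε * ((u * v) * w) := by
      rw [← h.rotate huv, ← mul_assoc, ← mul_assoc, ← mul_assoc, ← mul_assoc]
      obtain ⟨-, -, -, -, -, -, -, hc, -⟩ := h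
      rw [hc v]
    rw [e, h.YY_eps, h.YY_sgn n w huv, neg_one_smul, neg_neg]
    abel
  · rw [YY_eq_zero (l := m + n) (by omega), YY_eq_zero (l := n + l) (by omega), hk]
    simp only [map_zero, zero_smul, neg_zero, smul_zero, add_zero]
  · rw [YY_eq_zero (l := n + l) (by omega), map_zero,
      hb.YY_YY h hu hl (h.p_mul hv hw) (by omega) (by rwa [s1]), s1, ← mul_assoc,
      h.YY_sgn n w huv, hk, one_smul, smul_neg]
    abel

/-- Jacobi for three root vectors, no two of which have opposite roots. If the roots add up
to zero this is `H_α + H_β + H_γ = 0`. Otherwise nonzero terms only occur if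
`α + β + γ` is a root, which forces the three pairings to be `-1, -1, 0` in some order; then
two terms survive, and they cancel because of the commutation rule in `Ṽ`. -/
theorem IsLurieBracket.jacobi_gen (hb : IsLurieBracket Λ Vt B p ε br)
    (h : LurieData Λ Vt B p ε) {l m n : Λ} {u v w : Vt} (hu : p u = mk2 Λ l) (hl : B l l = 2)
    (hv : p v = mk2 Λ m) (hm : B m m = 2) (hw : p w = mk2 Λ n) (hn : B n n = 2)
    (h1 : l + m ≠ 0) (h2 : m + n ≠ 0) (h3 : n + l ≠ 0) :
    br (YY B p ε l u) (br (YY B p ε m v) (YY B p ε n w)) +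
      br (YY B p ε m v) (br (YY B p ε n w) (YY B p ε l u)) +
      br (YY B p ε n w) (br (YY B p ε l u) (YY B p ε m v)) = 0 := by
  have hN1 := h.norm_add l m
  have hN2 := h.norm_add m n
  have hN3 := h.norm_add n l
  have b1 := h.neg_one_le hl hm h1
  have b2 := h.neg_one_le hm hn h2
  have b3 := h.neg_one_le hn hl h3
  have q1 := h.p_mul hu hv
  have q2 := h.p_mul hv hw
  have q3 := h.p_mul hw hu
  have t1 : B l (m + n) = B l m + B n l := by rw [map_add, h.1 l n]
  have t2 : B m (n + l) = B m n + B l m := by rw [map_add, h.1 m l]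
  have t3 : B n (l + m) = B n l + B m n := by rw [map_add, h.1 n m]
  have hN := h.norm_add l (m + n)
  have s2 : m + (n + l) = l + (m + n) := by abel
  have s3 : n + (l + m) = l + (m + n) := by abel
  rw [hb.YY_YY h hu hl hv hm h1, hb.YY_YY h hv hm hw hn h2, hb.YY_YY h hw hn hu hl h3]
  by_cases h0 : l + (m + n) = 0
  · have e1 : B (l + m) (l + m) = 2 := by
      rw [← hn, eq_neg_of_add_eq_zero_right (s3.trans h0)]; simp
    have e2 : B (m + n) (m + n) = 2 := by
      rw [← hl, eq_neg_of_add_eq_zero_right h0]; simp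
    have e3 : B (n + l) (n + l) = 2 := by
      rw [← hm, eq_neg_of_add_eq_zero_right (s2.trans h0)]; simp
    have q := h.p_mul hu q2
    have q' := h.p_mul hw q1
    rw [h0] at q
    rw [s3, h0] at q'
    have r1 : w * (u * v) = u * (v * w) := by rw [← h.rotate q', mul_assoc]
    have r2 : v * (w * u) = u * (v * w) := by rw [← h.rotate q, mul_assoc]
    rw [hb.YY_YY_zero hu hl q2 e2 h0, hb.YY_YY_zero hv hm q3 e3 (s2.trans h0),
      hb.YY_YY_zero hw hn q1 e1 (s3.trans h0), r1, r2, ← smul_add, ← smul_add]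
    have e : iota Λ Vt B p ε (B l) + iota Λ Vt B p ε (B m) + iota Λ Vt B p ε (B n) = 0 := by
      refine Prod.ext ?_ ?_
      · change B l + B m + B n = 0
        rw [← map_add, ← map_add, add_assoc, h0, map_zero]
      · simp [iota]
    rw [e, smul_zero]
  have T1 : B m n = -1 → br (YY B p ε l u) (YY B p ε (m + n) (v * w)) =
      YY B p ε (l + (m + n)) (u * (v * w)) := fun hj =>
    hb.YY_YY h hu hl q2 (by omega) h0
  have T2 : B n l = -1 → br (YY B p ε m v) (YY B p ε (n + l) (w * u)) =
      YY B p ε (l + (m + n)) (v * (w * u)) := fun hj => by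
    rw [← s2]; exact hb.YY_YY h hv hm q3 (by omega) (by rwa [s2])
  have T3 : B l m = -1 → br (YY B p ε n w) (YY B p ε (l + m) (u * v)) =
      YY B p ε (l + (m + n)) (w * (u * v)) := fun hj => by
    rw [← s3]; exact hb.YY_YY h hw hn q1 (by omega) (by rwa [s3])
  have Z1 : B m n ≠ -1 → br (YY B p ε l u) (YY B p ε (m + n) (v * w)) = 0 := fun hj => by
    rw [YY_eq_zero (l := m + n) (by omega), map_zero]
  have Z2 : B n l ≠ -1 → br (YY B p ε m v) (YY B p ε (n + l) (w * u)) = 0 := fun hj => by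
    rw [YY_eq_zero (l := n + l) (by omega), map_zero]
  have Z3 : B l m ≠ -1 → br (YY B p ε n w) (YY B p ε (l + m) (u * v)) = 0 := fun hj => by
    rw [YY_eq_zero (l := l + m) (by omega), map_zero]
  by_cases hsum : B l m + B m n + B n l = -2
  · have hc : (B l m = 0 ∧ B m n = -1 ∧ B n l = -1) ∨ (B l m = -1 ∧ B m n = 0 ∧ B n l = -1) ∨
        (B l m = -1 ∧ B m n = -1 ∧ B n l = 0) := by omega
    rcases hc with ⟨i, j, k⟩ | ⟨i, j, k⟩ | ⟨i, j, k⟩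
    · rw [T1 j, T2 k, Z3 (by omega), ← mul_assoc v, h.comm_odd hu q2 (by omega), h.YY_eps]
      abel
    · rw [Z1 (by omega), T2 k, T3 i, ← mul_assoc w, h.comm_odd hv q3 (by omega), h.YY_eps]
      abel
    · rw [T1 j, Z2 (by omega), T3 i, ← mul_assoc u, h.comm_odd hw q1 (by omega), h.YY_eps]
      abel
  · have hz : ∀ g : Vt, YY B p ε (l + (m + n)) g = 0 := fun g => YY_eq_zero (by omega)
    have w1 : br (YY B p ε l u) (YY B p ε (m + n) (v * w)) = 0 := by
      by_cases hj : B m n = -1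
      · rw [T1 hj, hz]
      · exact Z1 hj
    have w2 : br (YY B p ε m v) (YY B p ε (n + l) (w * u)) = 0 := by
      by_cases hj : B n l = -1
      · rw [T2 hj, hz]
      · exact Z2 hj
    have w3 : br (YY B p ε n w) (YY B p ε (l + m) (u * v)) = 0 := by
      by_cases hj : B l m = -1
      · rw [T3 hj, hz]
      · exact Z3 hj
    rw [w1, w2, w3, add_zero, add_zero]

theorem IsLurieBracket.jacobi_XXX (hb : IsLurieBracket Λ Vt B p ε br)
    (h : LurieData Λ Vt B p ε) (a b c : Rt Λ Vt B p) :
    br (XX Λ Vt B p ε a) (br (XX Λ Vt B p ε b) (XX Λ Vt B p ε c)) +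
      br (XX Λ Vt B p ε b) (br (XX Λ Vt B p ε c) (XX Λ Vt B p ε a)) +
      br (XX Λ Vt B p ε c) (br (XX Λ Vt B p ε a) (XX Λ Vt B p ε b)) = 0 := by
  simp only [XX_eq]
  obtain ⟨ha, ha'⟩ := a.property
  obtain ⟨hb', hb''⟩ := b.property
  obtain ⟨hc, hc'⟩ := c.property
  by_cases h1 : a.val.1 + b.val.1 = 0
  · exact hb.jacobi_opp h ha ha' hb' hb'' hc hc' h1
  by_cases h2 : b.val.1 + c.val.1 = 0
  · rw [← hb.jacobi_opp h hb' hb'' hc hc' ha ha' h2]; abel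
  by_cases h3 : c.val.1 + a.val.1 = 0
  · rw [← hb.jacobi_opp h hc hc' ha ha' hb' hb'' h3]; abel
  exact hb.jacobi_gen h ha ha' hb' hb'' hc hc' h1 h2 h3

theorem IsLurieBracket.jacobi_iiX (hb : IsLurieBracket Λ Vt B p ε br)
    (f g : Module.Dual ℤ Λ) (a : Rt Λ Vt B p) :
    br (iota Λ Vt B p ε f) (br (iota Λ Vt B p ε g) (XX Λ Vt B p ε a)) +
      br (iota Λ Vt B p ε g) (br (XX Λ Vt B p ε a) (iota Λ Vt B p ε f)) +
      br (XX Λ Vt B p ε a) (br (iota Λ Vt B p ε f) (iota Λ Vt B p ε g)) = 0 := by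
  rw [hb.1, hb.2.1, hb.2.2.1, map_zero, map_neg, map_zsmul, map_zsmul, hb.2.1, hb.2.1,
    smul_comm]
  abel

theorem IsLurieBracket.jacobi_iXX (hb : IsLurieBracket Λ Vt B p ε br)
    (h : LurieData Λ Vt B p ε) (f : Module.Dual ℤ Λ) (a b : Rt Λ Vt B p) :
    br (iota Λ Vt B p ε f) (br (XX Λ Vt B p ε a) (XX Λ Vt B p ε b)) +
      br (XX Λ Vt B p ε a) (br (XX Λ Vt B p ε b) (iota Λ Vt B p ε f)) +
      br (XX Λ Vt B p ε b) (br (iota Λ Vt B p ε f) (XX Λ Vt B p ε a)) = 0 := by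
  rw [hb.2.1, hb.2.2.1, map_neg, map_zsmul, map_zsmul,
    hb.antisymm h (XX Λ Vt B p ε a) (XX Λ Vt B p ε b)]
  -- The bracket of the two root vectors has weight `γ + γ'`.
  have key : br (iota Λ Vt B p ε f) (br (XX Λ Vt B p ε a) (XX Λ Vt B p ε b)) =
      f (a.val.1 + b.val.1) • br (XX Λ Vt B p ε a) (XX Λ Vt B p ε b) := by
    rw [XX_eq, XX_eq]
    obtain ⟨ha, ha'⟩ := a.property
    obtain ⟨hb', hb''⟩ := b.property
    by_cases h0 : a.val.1 + b.val.1 = 0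
    · rw [hb.YY_YY_zero ha ha' hb' hb'' h0, h0, map_zsmul, hb.1, map_zero, zero_smul, smul_zero]
    · rw [hb.YY_YY h ha ha' hb' hb'' h0, hb.iota_YY]
  rw [key, map_add, add_smul, smul_neg]
  abel

/-- The Jacobi sum is additive in its first argument, so it may be checked on generators. -/
theorem jacobi_of_generators (y z : LL Λ Vt B p ε)
    (hi : ∀ f, br (iota Λ Vt B p ε f) (br y z) + br y (br z (iota Λ Vt B p ε f)) +
      br z (br (iota Λ Vt B p ε f) y) = 0)
    (hX : ∀ a, br (XX Λ Vt B p ε a) (br y z) + br y (br z (XX Λ Vt B p ε a)) +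
      br z (br (XX Λ Vt B p ε a) y) = 0) (x : LL Λ Vt B p ε) :
    br x (br y z) + br y (br z x) + br z (br x y) = 0 := by
  induction x using LL_induction with
  | hi f => exact hi f
  | hX a => exact hX a
  | hadd x x' h1 h2 =>
    simp only [map_add, AddMonoidHom.add_apply]
    calc _ = (br x (br y z) + br y (br z x) + br z (br x y)) +
          (br x' (br y z) + br y (br z x') + br z (br x' y)) := by abel
      _ = 0 := by rw [h1, h2, add_zero]
  | hneg x h1 =>
    simp only [map_neg, AddMonoidHom.neg_apply]
    rw [← neg_zero, ← h1]
    abel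

theorem IsLurieBracket.jacobi (hb : IsLurieBracket Λ Vt B p ε br)
    (h : LurieData Λ Vt B p ε) (x y z : LL Λ Vt B p ε) :
    br x (br y z) + br y (br z x) + br z (br x y) = 0 := by
  -- The Jacobi sum is invariant under cyclic rotation of its arguments.
  have cyc : ∀ x y z : LL Λ Vt B p ε, br y (br z x) + br z (br x y) + br x (br y z) = 0 →
      br x (br y z) + br y (br z x) + br z (br x y) = 0 := fun x y z e => by
    rw [← e]; abel
  refine jacobi_of_generators y z (fun f => ?_) (fun a => ?_) x <;> apply cyc
  · refine jacobi_of_generators z _ (fun g => ?_) (fun b => ?_) y <;> apply cyc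
    · refine jacobi_of_generators _ _ (fun k => ?_) (fun c => ?_) z <;> apply cyc
      · simp only [hb.1, map_zero, add_zero]
      · exact hb.jacobi_iiX f g c
    · refine jacobi_of_generators _ _ (fun k => ?_) (fun c => ?_) z
      · exact hb.jacobi_iiX k f b
      · exact cyc _ _ _ (hb.jacobi_iXX h f b c)
  · refine jacobi_of_generators z _ (fun g => ?_) (fun b => ?_) y
    · apply cyc
      refine jacobi_of_generators _ _ (fun k => ?_) (fun c => ?_) z
      · exact cyc _ _ _ (cyc _ _ _ (hb.jacobi_iiX g k a))
      · exact cyc _ _ _ (cyc _ _ _ (hb.jacobi_iXX h g c a))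
    · apply cyc
      refine jacobi_of_generators _ _ (fun k => ?_) (fun c => ?_) z
      · exact hb.jacobi_iXX h k a b
      · exact cyc _ _ _ (hb.jacobi_XXX h a b c)

end Helpers

/-- There is a unique `ℤ`-bilinear bracket on `L = Λ^∨ ⊕ L'` satisfying Lurie's
identities, and this bracket makes `L` a Lie ring over `ℤ`: it is alternating and
satisfies the Jacobi identity. -/
theorem existsUnique_lurieBracket
    (Λ : Type) [AddCommGroup Λ] [Module.Free ℤ Λ] [Module.Finite ℤ Λ]
    (Vt : Type) [Group Vt]
    (B : Λ →ₗ[ℤ] Λ →ₗ[ℤ] ℤ) (p : Vt → ModTwo Λ) (ε : Vt)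
    (hdata : LurieData Λ Vt B p ε) :
    (∃! br : LL Λ Vt B p ε →+ LL Λ Vt B p ε →+ LL Λ Vt B p ε,
      IsLurieBracket Λ Vt B p ε br) ∧
    (∀ br : LL Λ Vt B p ε →+ LL Λ Vt B p ε →+ LL Λ Vt B p ε,
      IsLurieBracket Λ Vt B p ε br →
        (∀ x : LL Λ Vt B p ε, br x x = 0) ∧
        (∀ x y z : LL Λ Vt B p ε,
          br x (br y z) + br y (br z x) + br z (br x y) = 0)) := by
  refine ⟨⟨lbr hdata, lbr_isLurieBracket hdata, fun br hb => ?_⟩, fun br hb => ?_⟩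
  · exact hb.eq_of hdata (lbr_isLurieBracket hdata)
  · exact ⟨hb.alt hdata, hb.jacobi hdata⟩

end Lurie
end

section
/- With the data (Λ, ⟨·,·⟩, Ṽ) and the Lie ring L as in the context, let k be a field of characteristic 0. Then Λ^∨ ⊗_ℤ k is a Cartan subalgebra of the Lie algebra L ⊗_ℤ k over k: it is an abelian (hence nilpotent) Lie subalgebra that is equal to its own normalizer in L ⊗_ℤ k. -/
/-!
Write `𝔱 = Λ^∨ ⊗ k`. That `𝔱` is abelian is the relation `[λ, λ'] = 0` extended bilinearly.
For the normalizer, let `e_i` be a basis of `Λ` with dual basis `e_i^∨`, and consider the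
Casimir-type operator `C x = ∑ i, [[x, ⟨e_i, ·⟩], e_i^∨]`. It kills `𝔱`, and it multiplies each
`X_γ̃` by `∑ i, ⟨e_i, γ⟩ e_i^∨(γ) = ⟨γ, γ⟩ = 2`. Hence `2 x - C x ∈ 𝔱` for every `x`
(`two_smul_sub_casimir_mem`). If `x` normalizes `𝔱`, then every `[x, ⟨e_i, ·⟩]` lies in the abelian
`𝔱`, so `C x = 0`, and `x ∈ 𝔱` because `2` is invertible in `k`. This argument needs neither the
finiteness of the set of roots nor the linear independence of root vectors.
-/

open scoped TensorProduct Classical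

namespace Lurie

variable (Λ : Type) [AddCommGroup Λ]

variable (Vt : Type) [Group Vt]
variable (B : Λ →ₗ[ℤ] Λ →ₗ[ℤ] ℤ) (p : Vt → ModTwo Λ) (ε : Vt)

variable (k : Type) [Field k]

/-- The image `𝔱 = Λ^∨ ⊗ k` of `Λ^∨` inside `L ⊗_ℤ k`. -/
def cartanSpan : Submodule k (k ⊗[ℤ] LL Λ Vt B p ε) :=
  Submodule.span k {z : k ⊗[ℤ] LL Λ Vt B p ε |
    ∃ f : Module.Dual ℤ Λ, z = (1 : k) ⊗ₜ[ℤ] iota Λ Vt B p ε f}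

theorem one_tmul_iota_mem (f : Module.Dual ℤ Λ) :
    (1 : k) ⊗ₜ[ℤ] iota Λ Vt B p ε f ∈ cartanSpan Λ Vt B p ε k :=
  Submodule.subset_span ⟨f, rfl⟩

/-- `L ⊗ k` is spanned over `k` by the elements `1 ⊗ λ` and `1 ⊗ X_γ̃`. -/
theorem mem_of_generators (S : Submodule k (k ⊗[ℤ] LL Λ Vt B p ε))
    (hι : ∀ f, (1 : k) ⊗ₜ[ℤ] iota Λ Vt B p ε f ∈ S)
    (hX : ∀ a, (1 : k) ⊗ₜ[ℤ] XX Λ Vt B p ε a ∈ S) (x : k ⊗[ℤ] LL Λ Vt B p ε) : x ∈ S := by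
  have hz : ∀ z : FreeAbelianGroup (Rt Λ Vt B p),
      (1 : k) ⊗ₜ[ℤ] ((0, QuotientAddGroup.mk z) : LL Λ Vt B p ε) ∈ S := by
    intro z
    induction z using FreeAbelianGroup.induction_on with
    | zero =>
      have h : ((0, QuotientAddGroup.mk 0) : LL Λ Vt B p ε) = 0 := rfl
      rw [h, TensorProduct.tmul_zero]
      exact S.zero_mem
    | of a => exact hX a
    | neg a _ =>
      have h : ((0, QuotientAddGroup.mk (-FreeAbelianGroup.of a)) : LL Λ Vt B p ε)
          = -XX Λ Vt B p ε a := by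
        ext1 <;> simp [XX]
      rw [h, TensorProduct.tmul_neg]
      exact S.neg_mem (hX a)
    | add u v hu hv =>
      have h : ((0, QuotientAddGroup.mk (u + v)) : LL Λ Vt B p ε)
          = (0, QuotientAddGroup.mk u) + (0, QuotientAddGroup.mk v) := by
        ext1 <;> simp
      rw [h, TensorProduct.tmul_add]
      exact S.add_mem hu hv
  induction x using TensorProduct.induction_on with
  | zero => exact S.zero_mem
  | add u v hu hv => exact S.add_mem hu hv
  | tmul c y =>
    obtain ⟨f, w⟩ := y
    obtain ⟨z, rfl⟩ := QuotientAddGroup.mk_surjective w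
    have h : ((f, QuotientAddGroup.mk z) : LL Λ Vt B p ε)
        = iota Λ Vt B p ε f + (0, QuotientAddGroup.mk z) := by
      ext1 <;> simp [iota]
    have hc : c ⊗ₜ[ℤ] ((f, QuotientAddGroup.mk z) : LL Λ Vt B p ε)
        = c • ((1 : k) ⊗ₜ[ℤ] ((f, QuotientAddGroup.mk z) : LL Λ Vt B p ε)) := by
      rw [TensorProduct.smul_tmul', smul_eq_mul, mul_one]
    rw [hc, h, TensorProduct.tmul_add]
    exact S.smul_mem c (S.add_mem (hι f) (hz z))

variable {Λ Vt B p ε k}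

section

variable {br : LL Λ Vt B p ε →+ LL Λ Vt B p ε →+ LL Λ Vt B p ε}
  {brk : (k ⊗[ℤ] LL Λ Vt B p ε) →ₗ[k] (k ⊗[ℤ] LL Λ Vt B p ε) →ₗ[k] (k ⊗[ℤ] LL Λ Vt B p ε)}

theorem brk_eq_zero_of_mem (hbr : IsLurieBracket Λ Vt B p ε br)
    (hext : ∀ x y : LL Λ Vt B p ε,
      brk ((1 : k) ⊗ₜ[ℤ] x) ((1 : k) ⊗ₜ[ℤ] y) = (1 : k) ⊗ₜ[ℤ] br x y)
    {x y : k ⊗[ℤ] LL Λ Vt B p ε}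
    (hx : x ∈ cartanSpan Λ Vt B p ε k) (hy : y ∈ cartanSpan Λ Vt B p ε k) : brk x y = 0 := by
  refine LinearMap.BilinMap.apply_apply_mem_of_mem_span (R := k) ⊥ _ _ brk ?_ x y hx hy
  rintro _ ⟨f, rfl⟩ _ ⟨g, rfl⟩
  simp [hext, hbr.1]

/-- The operator `x ↦ ∑ i, [[x, ⟨e_i, ·⟩], e_i^∨]` attached to a basis `e` of `Λ`. -/
noncomputable def casimir
    (brk : (k ⊗[ℤ] LL Λ Vt B p ε) →ₗ[k] (k ⊗[ℤ] LL Λ Vt B p ε) →ₗ[k] (k ⊗[ℤ] LL Λ Vt B p ε))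
    {ι : Type*} [Fintype ι] (e : Module.Basis ι ℤ Λ) :
    (k ⊗[ℤ] LL Λ Vt B p ε) →ₗ[k] (k ⊗[ℤ] LL Λ Vt B p ε) :=
  ∑ i, (brk.flip ((1 : k) ⊗ₜ[ℤ] iota Λ Vt B p ε (e.coord i))) ∘ₗ
    (brk.flip ((1 : k) ⊗ₜ[ℤ] iota Λ Vt B p ε (B (e i))))

theorem casimir_apply {ι : Type*} [Fintype ι] (e : Module.Basis ι ℤ Λ)
    (x : k ⊗[ℤ] LL Λ Vt B p ε) :
    casimir brk e x = ∑ i, brk (brk x ((1 : k) ⊗ₜ[ℤ] iota Λ Vt B p ε (B (e i))))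
      ((1 : k) ⊗ₜ[ℤ] iota Λ Vt B p ε (e.coord i)) := by
  simp [casimir]

theorem brk_X_iota (hbr : IsLurieBracket Λ Vt B p ε br)
    (hext : ∀ x y : LL Λ Vt B p ε,
      brk ((1 : k) ⊗ₜ[ℤ] x) ((1 : k) ⊗ₜ[ℤ] y) = (1 : k) ⊗ₜ[ℤ] br x y)
    (a : Rt Λ Vt B p) (f : Module.Dual ℤ Λ) :
    brk ((1 : k) ⊗ₜ[ℤ] XX Λ Vt B p ε a) ((1 : k) ⊗ₜ[ℤ] iota Λ Vt B p ε f)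
      = -((f a.val.1 : ℤ) : k) • ((1 : k) ⊗ₜ[ℤ] XX Λ Vt B p ε a) := by
  rw [hext, hbr.2.2.1, TensorProduct.tmul_neg, TensorProduct.tmul_smul, neg_smul,
    Int.cast_smul_eq_zsmul]

/-- The operator `casimir` multiplies every root vector by `⟨γ, γ⟩ = 2`. -/
theorem casimir_X (hbr : IsLurieBracket Λ Vt B p ε br)
    (hext : ∀ x y : LL Λ Vt B p ε,
      brk ((1 : k) ⊗ₜ[ℤ] x) ((1 : k) ⊗ₜ[ℤ] y) = (1 : k) ⊗ₜ[ℤ] br x y)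
    {ι : Type*} [Fintype ι] (e : Module.Basis ι ℤ Λ) (a : Rt Λ Vt B p) :
    casimir brk e ((1 : k) ⊗ₜ[ℤ] XX Λ Vt B p ε a)
      = (2 : k) • ((1 : k) ⊗ₜ[ℤ] XX Λ Vt B p ε a) := by
  have hsum : ∑ i, B (e i) a.val.1 * e.coord i a.val.1 = 2 := by
    have h : ∀ l : Λ, ∑ i, B (e i) l * e.coord i l = B l l := by
      intro l
      have h' := congrArg (fun m => B m l) (e.sum_repr l)
      simpa [mul_comm, -Module.Basis.sum_repr] using h'
    exact (h _).trans a.property.2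
  simp only [casimir_apply, brk_X_iota hbr hext, map_smul, LinearMap.smul_apply, smul_smul,
    neg_mul_neg]
  rw [← Finset.sum_smul]
  congr 1
  exact_mod_cast congrArg (Int.cast : ℤ → k) hsum

theorem two_smul_sub_casimir_mem (hbr : IsLurieBracket Λ Vt B p ε br)
    (hext : ∀ x y : LL Λ Vt B p ε,
      brk ((1 : k) ⊗ₜ[ℤ] x) ((1 : k) ⊗ₜ[ℤ] y) = (1 : k) ⊗ₜ[ℤ] br x y)
    {ι : Type*} [Fintype ι] (e : Module.Basis ι ℤ Λ) (x : k ⊗[ℤ] LL Λ Vt B p ε) :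
    (2 : k) • x - casimir brk e x ∈ cartanSpan Λ Vt B p ε k := by
  refine mem_of_generators Λ Vt B p ε k
    ((cartanSpan Λ Vt B p ε k).comap ((2 : k) • LinearMap.id - casimir brk e)) ?_ ?_ x
  · intro f
    have h : casimir brk e ((1 : k) ⊗ₜ[ℤ] iota Λ Vt B p ε f) = 0 := by
      simp only [casimir_apply, brk_eq_zero_of_mem hbr hext (one_tmul_iota_mem Λ Vt B p ε k f)
        (one_tmul_iota_mem Λ Vt B p ε k _), map_zero, LinearMap.zero_apply,
        Finset.sum_const_zero]
    simpa [h] using Submodule.smul_mem _ (2 : k) (one_tmul_iota_mem Λ Vt B p ε k f)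
  · intro a
    simp [casimir_X hbr hext]

end

/-- For a field `k` of characteristic `0`, the subspace `Λ^∨ ⊗ k` is a Cartan
subalgebra of `L ⊗_ℤ k`: it is an abelian (hence nilpotent) Lie subalgebra which is
equal to its own normalizer. Here `brk` denotes the `k`-bilinear extension of Lurie's
bracket to `L ⊗_ℤ k`. -/
theorem cartanSpan_isCartanSubalgebra
    (Λ : Type) [AddCommGroup Λ] [Module.Free ℤ Λ] [Module.Finite ℤ Λ]
    (Vt : Type) [Group Vt]
    (B : Λ →ₗ[ℤ] Λ →ₗ[ℤ] ℤ) (p : Vt → ModTwo Λ) (ε : Vt)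
    (hdata : LurieData Λ Vt B p ε)
    (br : LL Λ Vt B p ε →+ LL Λ Vt B p ε →+ LL Λ Vt B p ε)
    (hbr : IsLurieBracket Λ Vt B p ε br)
    (k : Type) [Field k] [CharZero k]
    (brk : (k ⊗[ℤ] LL Λ Vt B p ε) →ₗ[k] (k ⊗[ℤ] LL Λ Vt B p ε) →ₗ[k]
      (k ⊗[ℤ] LL Λ Vt B p ε))
    (hext : ∀ x y : LL Λ Vt B p ε,
      brk ((1 : k) ⊗ₜ[ℤ] x) ((1 : k) ⊗ₜ[ℤ] y) = (1 : k) ⊗ₜ[ℤ] br x y) :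
    (∀ x ∈ cartanSpan Λ Vt B p ε k, ∀ y ∈ cartanSpan Λ Vt B p ε k, brk x y = 0) ∧
    (∀ x : k ⊗[ℤ] LL Λ Vt B p ε,
      (∀ y ∈ cartanSpan Λ Vt B p ε k, brk x y ∈ cartanSpan Λ Vt B p ε k) ↔
        x ∈ cartanSpan Λ Vt B p ε k) := by
  have hab := fun x hx y hy => brk_eq_zero_of_mem (x := x) (y := y) hbr hext hx hy
  refine ⟨hab, fun x => ⟨fun hx => ?_, fun hx y hy => ?_⟩⟩
  · let e := Module.Free.chooseBasis ℤ Λ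
    have hC : casimir brk e x = 0 := by
      rw [casimir_apply]
      exact Finset.sum_eq_zero fun i _ =>
        hab _ (hx _ (one_tmul_iota_mem Λ Vt B p ε k _)) _ (one_tmul_iota_mem Λ Vt B p ε k _)
    have h2 := two_smul_sub_casimir_mem hbr hext e x
    rw [hC, sub_zero] at h2
    exact (Submodule.smul_mem_iff _ (two_ne_zero : (2 : k) ≠ 0)).1 h2
  · rw [hab x hx y hy]
    exact Submodule.zero_mem _

end Lurie
end
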